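/- arXiv:1908.00651 — 5 statements merged into one kernel-verified Lean document; each statement's English description precedes it below -/
import Mathlib

section
/- Fiberwise interpolation of negative-definite isotropic subspaces (pointwise form of the paper's Proposition on interpolating strictly negative Lagrangian distributions): Let E be a finite-dimensional complex vector space and ω a symmetric ℂ-bilinear form on E. Let E₀ and E₁ be real subspaces of E, both Im ω-isotropic, and suppose Re ω is negative definite on E₀ and on E₁. Assume E is the internal direct sum (as a real vector space) of E₁ and i·E₁, and let π : E → E be the ℝ-linear projection onto E₁ with kernel i·E₁. For t ∈ ℝ define the ℝ-linear map π_t : E₀ → E by π_t(e) = e − t·(e − π(e)). Then for every t ∈ [0,1]: (a) π_t is injective on E₀; (b) the image π_t(E₀) is Im ω-isotropic; (c) Re ω is negative definite on π_t(E₀). Moreover π_0 is the inclusion of E₀ into E, and if finrank_ℝ E₀ = finrank_ℝ E₁ then π_1(E₀) = E₁. -/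
open Complex Module

noncomputable def mulI (E : Type*) [AddCommGroup E] [Module ℂ E] : E →ₗ[ℝ] E where
  toFun v := Complex.I • v
  map_add' v w := smul_add _ _ _
  map_smul' t v := (smul_comm t Complex.I v).symm

def ImIsotropic {E : Type*} [AddCommGroup E] [Module ℂ E]
    (ω : E →ₗ[ℂ] E →ₗ[ℂ] ℂ) (V : Submodule ℝ E) : Prop :=
  ∀ v ∈ V, ∀ w ∈ V, (ω v w).im = 0

def ReNegDef {E : Type*} [AddCommGroup E] [Module ℂ E]
    (ω : E →ₗ[ℂ] E →ₗ[ℂ] ℂ) (V : Submodule ℝ E) : Prop :=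
  ∀ v ∈ V, v ≠ 0 → (ω v v).re < 0

/-- Fiberwise interpolation of negative-definite isotropic subspaces:
for `t ∈ [0,1]`, the map `π_t = id - t • (id - π)` is injective on `E₀`, its image is
`Im ω`-isotropic and `Re ω`-negative definite; `π_0` is the inclusion, and if
`finrank ℝ E₀ = finrank ℝ E₁` then `π_1(E₀) = E₁`. -/
theorem stmt0 {E : Type*} [AddCommGroup E] [Module ℂ E] [FiniteDimensional ℂ E]
    (ω : E →ₗ[ℂ] E →ₗ[ℂ] ℂ) (hsym : ∀ v w : E, ω v w = ω w v)
    (E₀ E₁ : Submodule ℝ E)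
    (h₀iso : ImIsotropic ω E₀) (h₁iso : ImIsotropic ω E₁)
    (h₀neg : ReNegDef ω E₀) (h₁neg : ReNegDef ω E₁)
    (hdisj : E₁ ⊓ E₁.map (mulI E) = ⊥) (hsup : E₁ ⊔ E₁.map (mulI E) = ⊤)
    (π : E →ₗ[ℝ] E)
    (hπ_id : ∀ v ∈ E₁, π v = v)
    (hπ_ker : ∀ v ∈ E₁.map (mulI E), π v = 0)
    (hπ_range : ∀ v : E, π v ∈ E₁)
    (πt : ℝ → E →ₗ[ℝ] E)
    (hπt : ∀ (t : ℝ) (e : E), πt t e = e - t • (e - π e)) :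
    (∀ t ∈ Set.Icc (0 : ℝ) 1,
        Set.InjOn (πt t) (E₀ : Set E) ∧
        ImIsotropic ω (E₀.map (πt t)) ∧
        ReNegDef ω (E₀.map (πt t))) ∧
    (∀ e ∈ E₀, πt 0 e = e) ∧
    (finrank ℝ E₀ = finrank ℝ E₁ → E₀.map (πt 1) = E₁) := by
  have dec : ∀ e : E, ∃ b ∈ E₁, e = π e + Complex.I • b := by
    intro e
    have he : e ∈ E₁ ⊔ E₁.map (mulI E) := by rw [hsup]; trivial
    obtain ⟨a, ha, c, hc, rfl⟩ := Submodule.mem_sup.1 he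
    have h1 : π (a + c) = a := by rw [map_add, hπ_id a ha, hπ_ker c hc, add_zero]
    obtain ⟨b, hb, rfl⟩ := hc
    exact ⟨b, hb, by rw [h1]; rfl⟩
  have form : ∀ (t : ℝ) (e b : E), e = π e + Complex.I • b →
      πt t e = π e + ((((1 - t : ℝ) : ℂ)) * Complex.I) • b := by
    intro t e b h
    rw [hπt]
    have h2 : e - π e = Complex.I • b := by
      rw [sub_eq_iff_eq_add, add_comm]; exact h
    have h3 : t • (Complex.I • b) = ((t : ℂ) * Complex.I) • b := by
      rw [mul_smul, Complex.coe_smul]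
    rw [h2, h3, Complex.ofReal_sub, Complex.ofReal_one, sub_mul, sub_smul, one_mul, ← h2]
    abel
  have expand : ∀ (s : ℝ) (a b a' b' : E),
      ω (a + ((s : ℂ) * Complex.I) • b) (a' + ((s : ℂ) * Complex.I) • b') =
      ω a a' - (s : ℂ) ^ 2 * ω b b' + (s : ℂ) * Complex.I * (ω a b' + ω b a') := by
    intro s a b a' b'
    simp only [map_add, map_smul, LinearMap.add_apply, LinearMap.smul_apply, smul_eq_mul]
    linear_combination ((s : ℂ) ^ 2 * ω b b') * Complex.I_sq
  have him : ∀ (s : ℝ) (a b a' b' : E), a ∈ E₁ → b ∈ E₁ → a' ∈ E₁ → b' ∈ E₁ →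
      (ω (a + ((s : ℂ) * Complex.I) • b) (a' + ((s : ℂ) * Complex.I) • b')).im =
        s * ((ω a b').re + (ω b a').re) := by
    intro s a b a' b' ha hb ha' hb'
    rw [expand]
    simp [pow_two, h₁iso a ha a' ha', h₁iso b hb b' hb']
  have hre : ∀ (s : ℝ) (a b : E), a ∈ E₁ → b ∈ E₁ →
      (ω (a + ((s : ℂ) * Complex.I) • b) (a + ((s : ℂ) * Complex.I) • b)).re =
        (ω a a).re - s ^ 2 * (ω b b).re := by
    intro s a b ha hb
    rw [expand]
    simp [pow_two, h₁iso a ha b hb, h₁iso b hb a ha]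
  have one : ∀ e b : E, e = π e + Complex.I • b →
      e = π e + (((1 : ℝ) : ℂ) * Complex.I) • b := by
    intro e b h
    rw [Complex.ofReal_one, one_mul]; exact h
  have key : ∀ t ∈ Set.Icc (0 : ℝ) 1, ∀ e ∈ E₀, e ≠ 0 → (ω (πt t e) (πt t e)).re < 0 := by
    intro t ht e he hne
    obtain ⟨b, hb, h⟩ := dec e
    rw [form t e b h, hre _ _ _ (hπ_range e) hb]
    have h1 := h₀neg e he hne
    have h2 := hre 1 (π e) b (hπ_range e) hb
    rw [← one e b h] at h2
    have h3 : (ω b b).re ≤ 0 := by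
      by_cases hb0 : b = 0
      · simp [hb0]
      · exact (h₁neg b hb hb0).le
    have h4 : (1 - t) ^ 2 ≤ 1 := by nlinarith [ht.1, ht.2]
    nlinarith
  have inj : ∀ t ∈ Set.Icc (0 : ℝ) 1, Set.InjOn (πt t) (E₀ : Set E) := by
    intro t ht x hx y hy hxy
    by_contra hne
    have h := key t ht (x - y) (E₀.sub_mem hx hy) (sub_ne_zero.2 hne)
    rw [map_sub, hxy, sub_self] at h
    simp at h
  refine ⟨fun t ht => ⟨inj t ht, ?_, ?_⟩, ?_, ?_⟩
  · rintro _ ⟨e, he, rfl⟩ _ ⟨e', he', rfl⟩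
    obtain ⟨b, hb, h⟩ := dec e
    obtain ⟨b', hb', h'⟩ := dec e'
    rw [form t e b h, form t e' b' h', him _ _ _ _ _ (hπ_range e) hb (hπ_range e') hb']
    have h2 := him 1 (π e) b (π e') b' (hπ_range e) hb (hπ_range e') hb'
    rw [← one e b h, ← one e' b' h', h₀iso e he e' he', one_mul] at h2
    rw [← h2, mul_zero]
  · rintro _ ⟨e, he, rfl⟩ hne
    exact key t ht e he (fun h0 => hne (by rw [h0, map_zero]))
  · intro e _
    rw [hπt, zero_smul, sub_zero]
  · intro hfr
    haveI : FiniteDimensional ℝ E := FiniteDimensional.complexToReal E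
    apply Submodule.eq_of_le_of_finrank_eq
    · rintro _ ⟨e, _, rfl⟩
      rw [hπt, one_smul, sub_sub_cancel]
      exact hπ_range e
    · rw [← hfr]
      have hi := inj 1 ⟨zero_le_one, le_rfl⟩
      have hinj : Function.Injective ((πt 1).domRestrict E₀) := by
        intro x y hxy
        exact Subtype.ext (hi x.2 y.2 hxy)
      rw [← LinearMap.finrank_range_of_inj hinj, LinearMap.range_domRestrict]
end

section
/- Isotropy is preserved along the interpolating family: Let E be a complex vector space and ω a symmetric ℂ-bilinear form on E. Let E₁ be an Im ω-isotropic real subspace of E. If a, b, a', b' ∈ E₁ satisfy Im ω(a + i·b, a' + i·b') = 0, then Im ω(a + t·i·b, a' + t·i·b') = 0 for every t ∈ ℝ. -/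
open Complex Module

/-- Isotropy is preserved along the interpolating family. -/
theorem stmt2 {E : Type*} [AddCommGroup E] [Module ℂ E]
    (ω : E →ₗ[ℂ] E →ₗ[ℂ] ℂ) (hsym : ∀ v w : E, ω v w = ω w v)
    (E₁ : Submodule ℝ E)
    (hiso : ImIsotropic ω E₁) :
    ∀ a ∈ E₁, ∀ b ∈ E₁, ∀ a' ∈ E₁, ∀ b' ∈ E₁,
      (ω (a + Complex.I • b) (a' + Complex.I • b')).im = 0 →
      ∀ t : ℝ,
        (ω (a + t • (Complex.I • b)) (a' + t • (Complex.I • b'))).im = 0 := by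
  intro a ha b hb a' ha' b' hb' h t
  have h1 := hiso a ha a' ha'
  have h2 := hiso b hb b' hb'
  rw [← Complex.coe_smul t (Complex.I • b), ← Complex.coe_smul t (Complex.I • b')]
  simp only [map_add, map_smul, LinearMap.add_apply, LinearMap.smul_apply, smul_eq_mul,
    Complex.add_im, Complex.mul_im, Complex.mul_re, Complex.I_re, Complex.I_im,
    Complex.ofReal_re, Complex.ofReal_im, Complex.add_re] at h ⊢
  rw [h1, h2] at h ⊢
  linear_combination t * h
end

section
/- Real splitting of a complex vector space by a half-dimensional negative-definite real subspace (the splitting E = E₁ ⊕ i·E₁ used throughout the paper's interpolation arguments): Let E be a finite-dimensional complex vector space and ω a symmetric ℂ-bilinear form on E. Let E₁ be a real subspace of E with finrank_ℝ E₁ = finrank_ℂ E, and suppose Re ω is negative definite on E₁. Then E is the internal direct sum of E₁ and i·E₁ as real vector spaces: E₁ ∩ (i·E₁) = {0} and E₁ + i·E₁ = E. -/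
open Complex Module

/-- Real splitting of a complex vector space by a half-dimensional negative-definite
real subspace: `E = E₁ ⊕ i·E₁`. -/
theorem stmt5 {E : Type*} [AddCommGroup E] [Module ℂ E] [FiniteDimensional ℂ E]
    (ω : E →ₗ[ℂ] E →ₗ[ℂ] ℂ) (hsym : ∀ v w : E, ω v w = ω w v)
    (E₁ : Submodule ℝ E)
    (hrank : finrank ℝ E₁ = finrank ℂ E)
    (hneg : ReNegDef ω E₁) :
    E₁ ⊓ E₁.map (mulI E) = ⊥ ∧ E₁ ⊔ E₁.map (mulI E) = ⊤ := by
  have hinf : E₁ ⊓ E₁.map (mulI E) = ⊥ := by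
    rw [Submodule.eq_bot_iff]
    rintro x ⟨hx, hx'⟩
    obtain ⟨w, hw, rfl⟩ := hx'
    by_contra hne
    have hw0 : w ≠ 0 := by
      rintro rfl
      exact hne (map_zero _)
    have h1 := hneg w hw hw0
    have h2 := hneg _ hx hne
    have h3 : mulI E w = Complex.I • w := rfl
    have h4 : ω (mulI E w) (mulI E w) = - ω w w := by
      rw [h3]
      simp only [map_smul, LinearMap.smul_apply, smul_eq_mul]
      rw [← mul_assoc, Complex.I_mul_I]
      ring
    rw [h4, Complex.neg_re] at h2
    linarith
  refine ⟨hinf, ?_⟩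
  have : FiniteDimensional ℝ E := FiniteDimensional.complexToReal E
  have hinj : Function.Injective (mulI E) := by
    intro a b h
    exact smul_right_injective E Complex.I_ne_zero h
  have hmap : finrank ℝ (E₁.map (mulI E)) = finrank ℝ E₁ :=
    (Submodule.equivMapOfInjective (mulI E) hinj E₁).finrank_eq.symm
  have hsum := Submodule.finrank_sup_add_finrank_inf_eq E₁ (E₁.map (mulI E))
  rw [hinf, finrank_bot, hmap, hrank] at hsum
  apply Submodule.eq_top_of_finrank_eq
  rw [finrank_real_of_complex]
  omega
end

section
/- Gluing of negative-definite isotropic half-dimensional families over a topological base (a continuous, trivial-bundle rendering of the paper's Proposition on gluing strictly negative maximally isotropic sub-bundles): Let E be a finite-dimensional complex vector space, ω a nondegenerate symmetric ℂ-bilinear form on E, and n = finrank_ℂ E. Let F be a real vector space with finrank_ℝ F = n. Let M be a normal topological space, U ⊆ M open, and V ⊆ U closed in M. Suppose ψ₀ : U → Hom_ℝ(F, E) and ψ₁ : M → Hom_ℝ(F, E) are continuous maps (Hom_ℝ(F, E) carrying its standard topology as a finite-dimensional real vector space) such that ψ₀(x) is injective with Im ω-isotropic range on which Re ω is negative definite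 for every x ∈ U, and ψ₁(x) is injective with Im ω-isotropic range on which Re ω is negative definite for every x ∈ M. Then there is a function L assigning to each x ∈ M a real subspace L(x) of E such that: (a) for every x ∈ M, L(x) is Im ω-isotropic, Re ω is negative definite on L(x), and finrank_ℝ L(x) = n; (b) L(x) = range ψ₁(x) for all x ∈ M ∖ U; (c) L(x) = range ψ₀(x) for all x ∈ V; (d) every point of M has an open neighborhood O and a continuous map χ : O → Hom_ℝ(F, E) with χ(x) injective and range χ(x) = L(x) for all x ∈ O. -/
open Complex Module

noncomputable def TT {E F : Type*} [NormedAddCommGroup E] [NormedSpace ℂ E]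
    [NormedAddCommGroup F] [NormedSpace ℝ F] (ψ : F →L[ℝ] E) : (F × F) →L[ℝ] E :=
  ψ.comp (ContinuousLinearMap.fst ℝ F F) + (I • ψ).comp (ContinuousLinearMap.snd ℝ F F)

lemma TT_apply {E F : Type*} [NormedAddCommGroup E] [NormedSpace ℂ E]
    [NormedAddCommGroup F] [NormedSpace ℝ F] (ψ : F →L[ℝ] E) (p : F × F) :
    TT ψ p = ψ p.1 + I • ψ p.2 := by
  simp [TT]

lemma TT_cont {E F : Type*} [NormedAddCommGroup E] [NormedSpace ℂ E]
    [NormedAddCommGroup F] [NormedSpace ℝ F] :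
    Continuous (TT : (F →L[ℝ] E) → ((F × F) →L[ℝ] E)) := by
  unfold TT
  fun_prop

def Good {E F : Type*} [NormedAddCommGroup E] [NormedSpace ℂ E]
    [NormedAddCommGroup F] [NormedSpace ℝ F] (ω : E →ₗ[ℂ] E →ₗ[ℂ] ℂ) (ψ : F →L[ℝ] E) : Prop :=
  (∀ a b, (ω (ψ a) (ψ b)).im = 0) ∧ ∀ a, a ≠ 0 → (ω (ψ a) (ψ a)).re < 0

lemma Good.inj {E F : Type*} [NormedAddCommGroup E] [NormedSpace ℂ E]
    [NormedAddCommGroup F] [NormedSpace ℝ F] {ω : E →ₗ[ℂ] E →ₗ[ℂ] ℂ} {ψ : F →L[ℝ] E}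
    (h : Good ω ψ) : Function.Injective ψ := by
  rw [injective_iff_map_eq_zero]
  intro a ha
  by_contra hne
  have := h.2 a hne
  simp [ha] at this

lemma Good.nonpos {E F : Type*} [NormedAddCommGroup E] [NormedSpace ℂ E]
    [NormedAddCommGroup F] [NormedSpace ℝ F] {ω : E →ₗ[ℂ] E →ₗ[ℂ] ℂ} {ψ : F →L[ℝ] E}
    (h : Good ω ψ) (a : F) : (ω (ψ a) (ψ a)).re ≤ 0 := by
  by_cases ha : a = 0
  · simp [ha]
  · exact (h.2 a ha).le

lemma Good.iso {E F : Type*} [NormedAddCommGroup E] [NormedSpace ℂ E]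
    [NormedAddCommGroup F] [NormedSpace ℝ F] {ω : E →ₗ[ℂ] E →ₗ[ℂ] ℂ} {ψ : F →L[ℝ] E}
    (h : Good ω ψ) : ImIsotropic ω (LinearMap.range (ψ : F →ₗ[ℝ] E)) ∧
      ReNegDef ω (LinearMap.range (ψ : F →ₗ[ℝ] E)) := by
  constructor
  · rintro _ ⟨a, rfl⟩ _ ⟨b, rfl⟩
    exact h.1 a b
  · rintro _ ⟨a, rfl⟩ hne
    refine h.2 a ?_
    rintro rfl
    simp at hne

lemma good_of {E F : Type*} [NormedAddCommGroup E] [NormedSpace ℂ E]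
    [NormedAddCommGroup F] [NormedSpace ℝ F] {ω : E →ₗ[ℂ] E →ₗ[ℂ] ℂ} {ψ : F →L[ℝ] E}
    (h : Function.Injective ψ ∧ ImIsotropic ω (LinearMap.range (ψ : F →ₗ[ℝ] E)) ∧
      ReNegDef ω (LinearMap.range (ψ : F →ₗ[ℝ] E))) : Good ω ψ := by
  refine ⟨fun a b => h.2.1 _ ⟨a, rfl⟩ _ ⟨b, rfl⟩, fun a ha => h.2.2 _ ⟨a, rfl⟩ ?_⟩
  intro h0
  exact ha ((injective_iff_map_eq_zero ψ).1 h.1 a h0)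

lemma Good.TT_inj {E F : Type*} [NormedAddCommGroup E] [NormedSpace ℂ E]
    [NormedAddCommGroup F] [NormedSpace ℝ F] {ω : E →ₗ[ℂ] E →ₗ[ℂ] ℂ} {ψ : F →L[ℝ] E}
    (h : Good ω ψ) : Function.Injective (TT ψ) := by
  rw [injective_iff_map_eq_zero]
  rintro ⟨a, b⟩ hab
  rw [TT_apply] at hab
  have h1 : ψ a = -(I • ψ b) := eq_neg_of_add_eq_zero_left hab
  have h2 : (ω (ψ a) (ψ a)).re = - (ω (ψ b) (ψ b)).re := by
    rw [h1]
    simp [← mul_assoc]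
  have ha : a = 0 := by
    by_contra hne
    have := h.2 a hne
    have := h.nonpos b
    linarith
  have hb : b = 0 := by
    by_contra hne
    have := h.2 b hne
    have := h.nonpos a
    linarith
  simp [ha, hb]

lemma good_mix {E F : Type*} [NormedAddCommGroup E] [NormedSpace ℂ E]
    [NormedAddCommGroup F] [NormedSpace ℝ F] {ω : E →ₗ[ℂ] E →ₗ[ℂ] ℂ} {ψ φ : F →L[ℝ] E}
    (h : Good ω ψ) (h' : Good ω φ) (P Q : F →L[ℝ] F) (hPQ : ∀ a, φ a = ψ (P a) + I • ψ (Q a))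
    (t : ℝ) (h0 : 0 ≤ t) (h1 : t ≤ 1) :
    Good ω (ψ.comp P + t • (I • ψ.comp Q)) := by
  constructor
  · intro a b
    have e := h'.1 a b
    have e1 := h.1 (P a) (P b)
    have e2 := h.1 (Q a) (Q b)
    rw [hPQ, hPQ] at e
    simp [e1, e2] at e
    simp [e1, e2]
    linear_combination t * e
  · intro a ha
    have e := h'.2 a ha
    have e1 := h.1 (P a) (Q a)
    have e2 := h.1 (Q a) (P a)
    have e3 := h.nonpos (Q a)
    rw [hPQ] at e
    simp [e1, e2] at e
    simp [e1, e2]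
    nlinarith [mul_nonneg (mul_nonneg (sub_nonneg.2 h1) (add_nonneg zero_le_one h0)) (neg_nonneg.2 e3)]

/-- Gluing of negative-definite isotropic half-dimensional families over a
topological base: a continuous, trivial-bundle rendering of the proposition on
gluing strictly negative maximally isotropic sub-bundles. -/
theorem stmt10 {E : Type*} [NormedAddCommGroup E] [NormedSpace ℂ E]
    [FiniteDimensional ℂ E]
    (ω : E →ₗ[ℂ] E →ₗ[ℂ] ℂ) (hsym : ∀ v w : E, ω v w = ω w v)
    (hnd : ∀ v : E, (∀ w : E, ω v w = 0) → v = 0)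
    (n : ℕ) (hn : n = finrank ℂ E)
    {F : Type*} [NormedAddCommGroup F] [NormedSpace ℝ F] [FiniteDimensional ℝ F]
    (hF : finrank ℝ F = n)
    {M : Type*} [TopologicalSpace M] [NormalSpace M]
    (U V : Set M) (hU : IsOpen U) (hVU : V ⊆ U) (hV : IsClosed V)
    (ψ₀ : U → (F →L[ℝ] E)) (hψ₀c : Continuous ψ₀)
    (ψ₁ : M → (F →L[ℝ] E)) (hψ₁c : Continuous ψ₁)
    (hψ₀ : ∀ x : U, Function.Injective (ψ₀ x) ∧
      ImIsotropic ω (LinearMap.range ((ψ₀ x : F →ₗ[ℝ] E))) ∧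
      ReNegDef ω (LinearMap.range ((ψ₀ x : F →ₗ[ℝ] E))))
    (hψ₁ : ∀ x : M, Function.Injective (ψ₁ x) ∧
      ImIsotropic ω (LinearMap.range ((ψ₁ x : F →ₗ[ℝ] E))) ∧
      ReNegDef ω (LinearMap.range ((ψ₁ x : F →ₗ[ℝ] E)))) :
    ∃ L : M → Submodule ℝ E,
      (∀ x : M, ImIsotropic ω (L x) ∧ ReNegDef ω (L x) ∧ finrank ℝ (L x) = n) ∧
      (∀ x : M, x ∉ U → L x = LinearMap.range ((ψ₁ x : F →ₗ[ℝ] E))) ∧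
      (∀ x : M, ∀ hx : x ∈ V, L x = LinearMap.range ((ψ₀ ⟨x, hVU hx⟩ : F →ₗ[ℝ] E))) ∧
      (∀ x : M, ∃ O : Set M, IsOpen O ∧ x ∈ O ∧
        ∃ χ : O → (F →L[ℝ] E), Continuous χ ∧
          ∀ y : O, Function.Injective (χ y) ∧
            LinearMap.range ((χ y : F →ₗ[ℝ] E)) = L y) := by
  classical
  have hψ₀' : ∀ x, Good ω (ψ₀ x) := fun x => good_of (hψ₀ x)
  have hψ₁' : ∀ x, Good ω (ψ₁ x) := fun x => good_of (hψ₁ x)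
  have : FiniteDimensional ℝ E := FiniteDimensional.complexToReal E
  have : CompleteSpace F := FiniteDimensional.complete ℝ F
  have hdim : finrank ℝ (F × F) = finrank ℝ E := by
    rw [finrank_real_of_complex, Module.finrank_prod]; omega
  have hequiv : ∀ x : M, ∃ e : (F × F) ≃L[ℝ] E, (e : (F × F) →L[ℝ] E) = TT (ψ₁ x) := by
    intro x
    refine ⟨(LinearEquiv.ofInjectiveOfFinrankEq (TT (ψ₁ x) : (F × F) →ₗ[ℝ] E)
      (hψ₁' x).TT_inj hdim).toContinuousLinearEquiv, ?_⟩
    exact ContinuousLinearMap.ext fun p => by simp; rfl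
  let S : M → (E →L[ℝ] (F × F)) := fun x => (TT (ψ₁ x)).inverse
  have hScont : Continuous S := by
    rw [continuous_iff_continuousAt]
    intro x
    obtain ⟨e, he⟩ := hequiv x
    have h1 : ContinuousAt ContinuousLinearMap.inverse (e : (F × F) →L[ℝ] E) :=
      (contDiffAt_map_inverse (n := 0) e).continuousAt
    rw [he] at h1
    exact ContinuousAt.comp (f := fun x => TT (ψ₁ x)) h1 (TT_cont.comp hψ₁c).continuousAt
  have hS : ∀ x v, TT (ψ₁ x) (S x v) = v := by
    intro x v
    obtain ⟨e, he⟩ := hequiv x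
    simp only [S, ← he, ContinuousLinearMap.inverse_equiv]
    simp
  obtain ⟨W, hWo, hVW, hWU⟩ := normal_exists_closure_subset hV hU hVU
  obtain ⟨ρ, hρ0, hρ1, hρ⟩ := exists_continuous_zero_one_of_isClosed (s := Wᶜ) (t := V)
    hWo.isClosed_compl hV (by
      rw [Set.disjoint_left]; intro x hx hxV; exact hx (hVW hxV))
  let P : U → (F →L[ℝ] F) := fun x => (ContinuousLinearMap.fst ℝ F F).comp ((S x).comp (ψ₀ x))
  let Q : U → (F →L[ℝ] F) := fun x => (ContinuousLinearMap.snd ℝ F F).comp ((S x).comp (ψ₀ x))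
  have hSU : Continuous fun x : U => S x := hScont.comp continuous_subtype_val
  have hP : Continuous P := by
    exact continuous_const.clm_comp (hSU.clm_comp hψ₀c)
  have hQ : Continuous Q := by
    exact continuous_const.clm_comp (hSU.clm_comp hψ₀c)
  have hPQ : ∀ (x : U) a, ψ₀ x a = ψ₁ x (P x a) + I • ψ₁ x (Q x a) := by
    intro x a
    have := hS x (ψ₀ x a)
    rw [TT_apply] at this
    exact this.symm
  let χ : U → (F →L[ℝ] E) := fun x =>
    (ψ₁ x).comp (P x) + (ρ x) • (I • (ψ₁ x).comp (Q x))
  have hψU : Continuous fun x : U => ψ₁ x := hψ₁c.comp continuous_subtype_val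
  have hρU : Continuous fun x : U => ρ x := ρ.continuous.comp continuous_subtype_val
  have hχc : Continuous χ :=
    (hψU.clm_comp hP).add (hρU.smul ((hψU.clm_comp hQ).const_smul I))
  have hχ : ∀ x, Good ω (χ x) := fun x =>
    good_mix (hψ₁' x) (hψ₀' x) (P x) (Q x) (hPQ x) (ρ x) (hρ x).1 (hρ x).2
  have hrank : ∀ φ : F →L[ℝ] E, Good ω φ →
      finrank ℝ (LinearMap.range (φ : F →ₗ[ℝ] E)) = n := by
    intro φ h
    rw [LinearMap.finrank_range_of_inj h.inj, hF]
  have hχ0 : ∀ x : U, ρ x = 0 → LinearMap.range (χ x : F →ₗ[ℝ] E) =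
      LinearMap.range (ψ₁ x : F →ₗ[ℝ] E) := by
    intro x hx
    refine Submodule.eq_of_le_of_finrank_eq ?_ ((hrank _ (hχ x)).trans (hrank _ (hψ₁' x)).symm)
    rintro _ ⟨a, rfl⟩
    exact ⟨P x a, by simp [χ, hx]⟩
  let L : M → Submodule ℝ E := fun x => if hx : x ∈ U then LinearMap.range (χ ⟨x, hx⟩ : F →ₗ[ℝ] E)
    else LinearMap.range (ψ₁ x : F →ₗ[ℝ] E)
  have hLU : ∀ x (hx : x ∈ U), L x = LinearMap.range (χ ⟨x, hx⟩ : F →ₗ[ℝ] E) := by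
    intro x hx; simp only [L, dif_pos hx]
  have hLn : ∀ x, x ∉ U → L x = LinearMap.range (ψ₁ x : F →ₗ[ℝ] E) := by
    intro x hx; simp only [L, dif_neg hx]
  refine ⟨L, ?_, hLn, ?_, ?_⟩
  · intro x
    by_cases hx : x ∈ U
    · rw [hLU x hx]
      exact ⟨(hχ _).iso.1, (hχ _).iso.2, hrank _ (hχ _)⟩
    · rw [hLn x hx]
      exact ⟨(hψ₁' _).iso.1, (hψ₁' _).iso.2, hrank _ (hψ₁' _)⟩
  · intro x hx
    rw [hLU x (hVU hx)]
    have h1 : ρ x = 1 := hρ1 hx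
    have : χ ⟨x, hVU hx⟩ = ψ₀ ⟨x, hVU hx⟩ := by
      ext a
      rw [hPQ]
      simp [χ, h1]
    rw [this]
  · intro x
    by_cases hx : x ∈ U
    · exact ⟨U, hU, hx, χ, hχc, fun y => ⟨(hχ y).inj, (hLU y y.2).symm⟩⟩
    · refine ⟨(closure W)ᶜ, isClosed_closure.isOpen_compl, fun h => hx (hWU h),
        fun y => ψ₁ y, hψ₁c.comp continuous_subtype_val, fun y => ⟨(hψ₁' y).inj, ?_⟩⟩
      by_cases hy : (y : M) ∈ U
      · rw [hLU y hy]
        refine (hχ0 ⟨y, hy⟩ ?_).symm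
        exact hρ0 (fun h => y.2 (subset_closure h))
      · exact (hLn y hy).symm
end

section
/- Injectivity at the endpoint of the interpolating family via the intersection lemma: Let E be a finite-dimensional complex vector space and ω a symmetric ℂ-bilinear form on E. Let E₀ and E₁ be real subspaces of E such that Re ω is negative definite on E₀ and on E₁, assume E is the internal direct sum (as a real vector space) of E₁ and i·E₁, and let π : E → E be the ℝ-linear projection onto E₁ with kernel i·E₁. Then the restriction of π to E₀ is injective; consequently, if moreover finrank_ℝ E₀ = finrank_ℝ E₁, then π maps E₀ ℝ-linearly isomorphically onto E₁. -/
open Complex Module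

/-- Injectivity at the endpoint of the interpolating family: `π` restricted to `E₀`
is injective, and if `finrank ℝ E₀ = finrank ℝ E₁` then `π` maps `E₀` isomorphically
onto `E₁`. -/
theorem stmt11 {E : Type*} [AddCommGroup E] [Module ℂ E] [FiniteDimensional ℂ E]
    (ω : E →ₗ[ℂ] E →ₗ[ℂ] ℂ) (hsym : ∀ v w : E, ω v w = ω w v)
    (E₀ E₁ : Submodule ℝ E)
    (h₀neg : ReNegDef ω E₀) (h₁neg : ReNegDef ω E₁)
    (hdisj : E₁ ⊓ E₁.map (mulI E) = ⊥) (hsup : E₁ ⊔ E₁.map (mulI E) = ⊤)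
    (π : E →ₗ[ℝ] E)
    (hπ_id : ∀ v ∈ E₁, π v = v)
    (hπ_ker : ∀ v ∈ E₁.map (mulI E), π v = 0)
    (hπ_range : ∀ v : E, π v ∈ E₁) :
    Set.InjOn π (E₀ : Set E) ∧
    (finrank ℝ E₀ = finrank ℝ E₁ → E₀.map π = E₁) := by
  have key : ∀ v ∈ E₀, π v = 0 → v = 0 := by
    intro v hv hv0
    have hvt : v ∈ E₁ ⊔ E₁.map (mulI E) := by rw [hsup]; trivial
    obtain ⟨a, ha, c, hc, rfl⟩ := Submodule.mem_sup.1 hvt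
    rw [map_add, hπ_id a ha, hπ_ker c hc, add_zero] at hv0
    subst hv0
    obtain ⟨b, hb, rfl⟩ := hc
    rw [zero_add] at hv ⊢
    by_contra hne
    have hb0 : b ≠ 0 := by
      rintro rfl
      exact hne (map_zero _)
    have h1 := h₁neg b hb hb0
    have h2 := h₀neg _ hv hne
    have h3 : ω (mulI E b) (mulI E b) = - ω b b := by
      change ω (Complex.I • b) (Complex.I • b) = _
      rw [map_smul, map_smul, LinearMap.smul_apply, smul_smul, Complex.I_mul_I, neg_smul, one_smul]
    rw [h3, Complex.neg_re] at h2
    linarith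
  have hinj : Set.InjOn π (E₀ : Set E) := by
    intro x hx y hy hxy
    have := key (x - y) (E₀.sub_mem hx hy) (by rw [map_sub, hxy, sub_self])
    exact sub_eq_zero.1 this
  refine ⟨hinj, fun hfr => ?_⟩
  haveI : FiniteDimensional ℝ E := FiniteDimensional.complexToReal E
  apply Submodule.eq_of_le_of_finrank_eq
  · rintro _ ⟨x, _, rfl⟩
    exact hπ_range x
  · rw [← hfr]
    have hi : Function.Injective (π.domRestrict E₀) := fun x y h =>
      Subtype.ext (hinj x.2 y.2 h)
    have := LinearMap.finrank_range_of_inj hi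
    rwa [LinearMap.range_domRestrict] at this
end
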